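/- Assume every round is contained in the interest sets of at least m bidders. A legal allocation (H,p) is Pareto optimal if and only if (1) all slots of all rounds are sold, i.e., |{i ∈ I : r ∈ H_i}| = m for every round r, and (2) there is no simple trading path with respect to (H,p). -/

import Mathlib

/-!
Single-valued combinatorial setting.  STATEMENT 13: assuming every
round interests at least `m` bidders, a legal allocation `(H, p)` is
Pareto optimal iff all slots of all rounds are sold and there is no
simple trading path.
-/

open Finset

/-- `(a, t)` is an alternating path with respect to allocation `H`
(with interest sets `S`). -/
def IsAltPath {I R : Type*} (S H : I → Finset R) (k : ℕ)
    (a : Fin (k + 1) → I) (t : Fin k → R) : Prop :=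
  ∀ s : Fin k,
    t s ∈ H (a s.castSucc) ∧ t s ∈ S (a s.succ) ∧ t s ∉ H (a s.succ)

/-- `(a, t)` is a trading path with respect to `(H, p)`. -/
def IsTradingPath {I R : Type*} (S H : I → Finset R)
    (v b p : I → ℝ) (k : ℕ) (a : Fin (k + 1) → I) (t : Fin k → R) : Prop :=
  IsAltPath S H k a t ∧
  v (a 0) < v (a (Fin.last k)) ∧
  v (a 0) ≤ b (a (Fin.last k)) - p (a (Fin.last k))

/-- Legality of an allocation `(H, p)` for `m` identical slots per round. -/
def LegalComb {I R : Type*} [Fintype I] [DecidableEq R]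
    (m : ℕ) (S : I → Finset R) (b : I → ℝ)
    (H : I → Finset R) (p : I → ℝ) : Prop :=
  (∀ i, H i ⊆ S i) ∧
  (∀ r : R, (univ.filter fun i : I => r ∈ H i).card ≤ m) ∧
  (∀ i, p i ≤ b i)

/-- Pareto optimality of a legal allocation `(H, p)`:
no legal allocation makes no bidder and the auctioneer worse off and
somebody strictly better off.  Bidder `i`'s utility is
`v_i · |H_i| − p_i`; the auctioneer's utility is `Σ_i p_i`. -/
def ParetoOptComb {I R : Type*} [Fintype I] [DecidableEq R]
    (m : ℕ) (S : I → Finset R) (v b : I → ℝ)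
    (H : I → Finset R) (p : I → ℝ) : Prop :=
  ¬ ∃ (H' : I → Finset R) (p' : I → ℝ),
      LegalComb m S b H' p' ∧
      (∀ i, v i * (H i).card - p i ≤ v i * (H' i).card - p' i) ∧
      (∑ i, p i ≤ ∑ i, p' i) ∧
      ((∃ i, v i * (H i).card - p i < v i * (H' i).card - p' i) ∨
        ∑ i, p i < ∑ i, p' i)

/-!
A Pareto improvement is built by hand: an unsold slot is given away for free, and along a trading
path every bidder passes a round on to the next, the last bidder paying the first bidder's valuation
to the first one.

For the converse, let `w i` be the least valuation of a bidder from whom `i` can be reached by an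
alternating path. If there is no simple trading path, a bidder with `w i < v i` has less than `w i`
of its budget left. Since `w` does not increase when a round is passed on and all slots are sold,
`H` maximises the total price `∑ w i * |H i|`. A Pareto improvement cannot charge a bidder more than
`w i` for each round gained, so it raises no revenue, hence charges everyone exactly `w i` per round
gained, and then no bidder is strictly better off.
-/

section Exchange

variable {ι M : Type*} [DecidableEq ι] [AddCommMonoid M] [LinearOrder M]
  [IsOrderedCancelAddMonoid M]

theorem sum_le_sum_of_card_le_of_forall_sdiff_le {c : ι → M} {s t : Finset ι} (hst : #s ≤ #t)
    (ht : ∀ i ∈ t \ s, 0 ≤ c i) (hc : ∀ i ∈ t \ s, ∀ j ∈ s \ t, c j ≤ c i) :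
    ∑ i ∈ s, c i ≤ ∑ i ∈ t, c i := by
  rw [← sum_sdiff_le_sum_sdiff]
  have hcard : #(s \ t) ≤ #(t \ s) := card_sdiff_le_card_sdiff_iff.mpr hst
  rcases (t \ s).eq_empty_or_nonempty with hempty | hne
  · have hempty' : s \ t = ∅ := by simpa [hempty] using hcard
    rw [hempty, hempty']
  · obtain ⟨i, hi, hmin⟩ := exists_min_image (t \ s) c hne
    calc ∑ j ∈ s \ t, c j ≤ #(s \ t) • c i := sum_le_card_nsmul _ _ _ (hc i hi)
      _ ≤ #(t \ s) • c i := nsmul_le_nsmul_left (ht i hi) hcard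
      _ ≤ ∑ j ∈ t \ s, c j := card_nsmul_le_sum _ _ _ hmin

end Exchange

theorem sum_mul_card_eq_sum_sum_filter_mem {I R A : Type*} [Fintype I] [Fintype R] [DecidableEq R]
    [NonAssocSemiring A] (c : I → A) (H : I → Finset R) :
    ∑ i, c i * #(H i) = ∑ r, ∑ i with r ∈ H i, c i := by
  simp only [sum_filter]
  rw [sum_comm]
  refine sum_congr rfl fun i _ => ?_
  rw [← sum_filter, filter_univ_mem, sum_const, nsmul_eq_mul']

section Reassign

variable {I R : Type*} [DecidableEq I] [DecidableEq R] {S H : I → Finset R} {i j : I} {r : R}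

/-- The allocation obtained from `H` by giving bidder `i` a slot of round `r`. -/
def grantRound (H : I → Finset R) (i : I) (r : R) : I → Finset R :=
  Function.update H i (insert r (H i))

/-- The allocation obtained from `H` by taking the slot of round `r` away from bidder `i`. -/
def revokeRound (H : I → Finset R) (i : I) (r : R) : I → Finset R :=
  Function.update H i ((H i).erase r)

/-- The allocation obtained from `H` when bidder `i` passes round `r` on to bidder `j`, the
elementary exchange along an alternating path. -/
def passRound (H : I → Finset R) (i j : I) (r : R) : I → Finset R :=
  grantRound (revokeRound H i r) j r

theorem mem_grantRound {l : I} {q : R} :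
    q ∈ grantRound H i r l ↔ q ∈ H l ∨ l = i ∧ q = r := by
  unfold grantRound
  grind

theorem mem_revokeRound {l : I} {q : R} :
    q ∈ revokeRound H i r l ↔ q ∈ H l ∧ ¬(l = i ∧ q = r) := by
  unfold revokeRound
  grind

theorem mem_passRound {l : I} {q : R} :
    q ∈ passRound H i j r l ↔ q ∈ H l ∧ ¬(l = i ∧ q = r) ∨ l = j ∧ q = r := by
  rw [passRound, mem_grantRound, mem_revokeRound]

theorem grantRound_subset (hHS : ∀ l, H l ⊆ S l) (hr : r ∈ S i) (l : I) :
    grantRound H i r l ⊆ S l := by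
  intro q hq
  rcases mem_grantRound.mp hq with h | ⟨rfl, rfl⟩
  exacts [hHS l h, hr]

theorem revokeRound_subset (H : I → Finset R) (i : I) (r : R) (l : I) :
    revokeRound H i r l ⊆ H l :=
  fun _ hq => (mem_revokeRound.mp hq).1

theorem passRound_subset (hHS : ∀ l, H l ⊆ S l) (hr : r ∈ S j) (l : I) :
    passRound H i j r l ⊆ S l :=
  grantRound_subset (fun l => (revokeRound_subset H i r l).trans (hHS l)) hr l

theorem card_grantRound (hr : r ∉ H i) (l : I) :
    #(grantRound H i r l) = #(H l) + if l = i then 1 else 0 := by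
  unfold grantRound
  grind

theorem card_revokeRound_add (hr : r ∈ H i) (l : I) :
    #(revokeRound H i r l) + (if l = i then 1 else 0) = #(H l) := by
  unfold revokeRound
  grind

theorem card_passRound_add (hi : r ∈ H i) (hj : r ∉ H j) (l : I) :
    #(passRound H i j r l) + (if l = i then 1 else 0) =
      #(H l) + if l = j then 1 else 0 := by
  have hj' : r ∉ revokeRound H i r j := fun h => hj (revokeRound_subset H i r j h)
  have hgrant := card_grantRound hj' l
  have hrevoke := card_revokeRound_add hi l
  rw [passRound]
  omega

variable [Fintype I]

theorem card_filter_mem_grantRound (hr : r ∉ H i) (q : R) :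
    #{l | q ∈ grantRound H i r l} = #{l | q ∈ H l} + if q = r then 1 else 0 := by
  simp only [mem_grantRound]
  split_ifs with hq
  · subst hq
    rw [← card_insert_of_notMem (a := i) (by simpa using hr)]
    congr 1
    grind
  · simp [hq]

theorem card_filter_mem_revokeRound_add (hr : r ∈ H i) (q : R) :
    #{l | q ∈ revokeRound H i r l} + (if q = r then 1 else 0) = #{l | q ∈ H l} := by
  simp only [mem_revokeRound]
  split_ifs with hq
  · subst hq
    rw [← card_erase_add_one (s := {l | q ∈ H l}) (a := i) (by simpa using hr)]
    congr 2
    grind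
  · simp [hq]

theorem card_filter_mem_passRound (hi : r ∈ H i) (hj : r ∉ H j) (q : R) :
    #{l | q ∈ passRound H i j r l} = #{l | q ∈ H l} := by
  have hj' : r ∉ revokeRound H i r j := fun h => hj (revokeRound_subset H i r j h)
  rw [passRound, card_filter_mem_grantRound hj', card_filter_mem_revokeRound_add hi]

end Reassign

section AlternatingPath

variable {I R : Type*} {S H : I → Finset R} {k : ℕ} {a : Fin (k + 1) → I} {t : Fin k → R}

/-- A simple alternating path: no bidder and no round occurs twice. -/
def IsSimpleAltPath (S H : I → Finset R) (k : ℕ) (a : Fin (k + 1) → I) (t : Fin k → R) : Prop :=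
  IsAltPath S H k a t ∧ Function.Injective a ∧ Function.Injective t

/-- Bidder `i` holds a round that `j` is interested in and does not hold; these are the steps of
alternating paths. -/
def CanPass (S H : I → Finset R) (i j : I) : Prop :=
  ∃ r ∈ H i, r ∈ S j ∧ r ∉ H j

theorem IsAltPath.tail_passRound [DecidableEq I] [DecidableEq R] {a : Fin (k + 2) → I}
    {t : Fin (k + 1) → R} (h : IsAltPath S H (k + 1) a t) (ha : Function.Injective a) :
    IsAltPath S (passRound H (a 0) (a 1) (t 0)) k (Fin.tail a) (Fin.tail t) := by
  intro s
  obtain ⟨hmem, hS, hnot⟩ := h s.succ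
  have hne0 : a s.castSucc.succ ≠ a 0 := ha.ne (Fin.succ_ne_zero _)
  have hne1 : a s.succ.succ ≠ a 1 := ha.ne fun h => Fin.succ_ne_zero s (Fin.succ_injective _ h)
  refine ⟨?_, hS, ?_⟩
  · exact mem_passRound.mpr (Or.inl ⟨hmem, fun h => hne0 h.1⟩)
  · exact fun h => (mem_passRound.mp h).elim (fun h => hnot h.1) fun h => hne1 h.1

theorem IsAltPath.exists_trade [Fintype I] [DecidableEq I] [DecidableEq R]
    (hHS : ∀ i, H i ⊆ S i) (h : IsAltPath S H k a t) (ha : Function.Injective a) :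
    ∃ H' : I → Finset R, (∀ i, H' i ⊆ S i) ∧ (∀ r, #{i | r ∈ H' i} = #{i | r ∈ H i}) ∧
      ∀ i, #(H' i) + (if i = a 0 then 1 else 0) =
        #(H i) + if i = a (Fin.last k) then 1 else 0 := by
  induction k generalizing H with
  | zero => exact ⟨H, hHS, fun _ => rfl, fun _ => rfl⟩
  | succ k ih =>
    obtain ⟨hmem, hS, hnot⟩ := h 0
    obtain ⟨H', hH'S, hcount, hcard⟩ :=
      ih (passRound_subset hHS hS) (h.tail_passRound ha) (ha.comp (Fin.succ_injective _))
    refine ⟨H', hH'S, fun r => (hcount r).trans (card_filter_mem_passRound hmem hnot r),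
      fun i => ?_⟩
    have hfirst : #(passRound H (a 0) (a 1) (t 0) i) + (if i = a 0 then 1 else 0) =
        #(H i) + if i = a 1 then 1 else 0 := card_passRound_add hmem hnot i
    have hrest : #(H' i) + (if i = a 1 then 1 else 0) =
        #(passRound H (a 0) (a 1) (t 0) i) + if i = a (Fin.last (k + 1)) then 1 else 0 := hcard i
    omega

theorem IsSimpleAltPath.take (h : IsSimpleAltPath S H k a t) (s : Fin (k + 1)) :
    IsSimpleAltPath S H s (a ∘ Fin.castLE s.isLt) (t ∘ Fin.castLE s.is_le) :=
  ⟨fun q => h.1 (q.castLE s.is_le), h.2.1.comp (Fin.castLE_injective _),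
    h.2.2.comp (Fin.castLE_injective _)⟩

theorem IsSimpleAltPath.snoc (h : IsSimpleAltPath S H k a t) {y : I} {r : R}
    (hmem : r ∈ H (a (Fin.last k))) (hS : r ∈ S y) (hnot : r ∉ H y)
    (hy : y ∉ Set.range a) (hr : r ∉ Set.range t) :
    IsSimpleAltPath S H (k + 1) (Fin.snoc a y : Fin (k + 2) → I)
      (Fin.snoc t r : Fin (k + 1) → R) := by
  refine ⟨fun s => ?_, Fin.snoc_injective_iff.mpr ⟨h.2.1, hy⟩,
    Fin.snoc_injective_iff.mpr ⟨h.2.2, hr⟩⟩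
  induction s using Fin.lastCases with
  | last => simpa only [Fin.snoc_castSucc, Fin.succ_last, Fin.snoc_last] using ⟨hmem, hS, hnot⟩
  | cast s => simpa only [Fin.snoc_castSucc, Fin.succ_castSucc] using h.1 s

/-- Some simple alternating path with respect to `H` is a trading path with respect to `(H, p)`. -/
def HasSimpleTradingPath (S H : I → Finset R) (v b p : I → ℝ) : Prop :=
  ∃ (k : ℕ) (a : Fin (k + 1) → I) (t : Fin k → R),
    IsTradingPath S H v b p k a t ∧ Function.Injective a ∧ Function.Injective t

/-- A simple alternating path of some length leads from `x` to `y`. -/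
def SimpleAltPathBetween (S H : I → Finset R) (x y : I) : Prop :=
  ∃ (k : ℕ) (a : Fin (k + 1) → I) (t : Fin k → R),
    IsSimpleAltPath S H k a t ∧ a 0 = x ∧ a (Fin.last k) = y

theorem SimpleAltPathBetween.tail {x y z : I} (h : SimpleAltPathBetween S H x y)
    (hyz : CanPass S H y z) : SimpleAltPathBetween S H x z := by
  obtain ⟨k, a, t, hpath, rfl, rfl⟩ := h
  obtain ⟨r, hmem, hS, hnot⟩ := hyz
  by_cases hz : z ∈ Set.range a
  · obtain ⟨s, rfl⟩ := hz
    exact ⟨s, _, _, hpath.take s, rfl, rfl⟩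
  by_cases hr : r ∈ Set.range t
  -- If round `r` was passed on before, its earlier holder on the path can pass it to `z` directly.
  · obtain ⟨s, rfl⟩ := hr
    have hz' : z ∉ Set.range (a ∘ Fin.castLE s.castSucc.isLt) :=
      fun h => hz (Set.range_comp_subset_range _ _ h)
    have hr' : t s ∉ Set.range (t ∘ Fin.castLE s.castSucc.is_le) := by
      rintro ⟨q, hq⟩
      exact q.isLt.ne (congrArg Fin.val (hpath.2.2 hq))
    exact ⟨_, _, _, (hpath.take s.castSucc).snoc (hpath.1 s).1 hS hnot hz' hr',
      Fin.snoc_castSucc (i := 0) .., Fin.snoc_last ..⟩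
  · exact ⟨_, _, _, hpath.snoc hmem hS hnot hz hr,
      Fin.snoc_castSucc (i := 0) .., Fin.snoc_last ..⟩

theorem simpleAltPathBetween_of_reflTransGen {x y : I}
    (h : Relation.ReflTransGen (CanPass S H) x y) : SimpleAltPathBetween S H x y := by
  induction h with
  | refl =>
    exact ⟨0, fun _ => x, Fin.elim0,
      ⟨fun s => s.elim0, Function.injective_of_subsingleton (α := Fin 1) _,
        Function.injective_of_subsingleton _⟩, rfl, rfl⟩
  | tail _ hstep ih => exact ih.tail hstep

end AlternatingPath

section ShadowPrice

variable {I R : Type*} {S H : I → Finset R} {v : I → ℝ} {i j : I}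

/-- The shadow price of a round for bidder `i`: the least valuation among the bidders from whom `i`
can be reached by an alternating path. -/
noncomputable def shadowPrice (S H : I → Finset R) (v : I → ℝ) (i : I) : ℝ :=
  ⨅ x : {x // Relation.ReflTransGen (CanPass S H) x i}, v x

theorem shadowPrice_nonneg (hv : ∀ i, 0 ≤ v i) (i : I) : 0 ≤ shadowPrice S H v i :=
  Real.iInf_nonneg fun x => hv x

variable [Finite I]

theorem shadowPrice_le {x : I} (h : Relation.ReflTransGen (CanPass S H) x i) :
    shadowPrice S H v i ≤ v x :=
  ciInf_le (Set.finite_range _).bddBelow (⟨x, h⟩ : {x // Relation.ReflTransGen _ x i})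

theorem shadowPrice_le_self (S H : I → Finset R) (v : I → ℝ) (i : I) :
    shadowPrice S H v i ≤ v i :=
  shadowPrice_le .refl

theorem exists_eq_shadowPrice (S H : I → Finset R) (v : I → ℝ) (i : I) :
    ∃ x, Relation.ReflTransGen (CanPass S H) x i ∧ v x = shadowPrice S H v i := by
  have : Nonempty {x // Relation.ReflTransGen (CanPass S H) x i} := ⟨⟨i, .refl⟩⟩
  obtain ⟨⟨x, hx⟩, hvx⟩ := exists_eq_ciInf_of_finite
    (f := fun x : {x // Relation.ReflTransGen (CanPass S H) x i} => v x)
  exact ⟨x, hx, hvx⟩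

theorem shadowPrice_le_of_canPass (h : CanPass S H i j) :
    shadowPrice S H v j ≤ shadowPrice S H v i := by
  obtain ⟨x, hx, hvx⟩ := exists_eq_shadowPrice S H v i
  exact hvx ▸ shadowPrice_le (hx.tail h)

theorem sub_lt_shadowPrice {b p : I → ℝ} (hno : ¬ HasSimpleTradingPath S H v b p)
    (hi : shadowPrice S H v i < v i) : b i - p i < shadowPrice S H v i := by
  obtain ⟨x, hx, hvx⟩ := exists_eq_shadowPrice S H v i
  obtain ⟨k, a, t, ⟨hpath, ha, ht⟩, rfl, rfl⟩ := simpleAltPathBetween_of_reflTransGen hx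
  rw [← hvx] at hi ⊢
  by_contra! hbudget
  exact hno ⟨k, a, t, ⟨hpath, hi, hbudget⟩, ha, ht⟩

end ShadowPrice

theorem sum_shadowPrice_mul_card_le {I R : Type*} [Fintype I] [Finite R] [DecidableEq R]
    {S H H' : I → Finset R} {v : I → ℝ} (hv : ∀ i, 0 ≤ v i) (hH' : ∀ i, H' i ⊆ S i)
    (hcount : ∀ r, #{i | r ∈ H' i} ≤ #{i | r ∈ H i}) :
    ∑ i, shadowPrice S H v i * #(H' i) ≤ ∑ i, shadowPrice S H v i * #(H i) := by
  classical
  cases nonempty_fintype R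
  simp only [sum_mul_card_eq_sum_sum_filter_mem]
  refine sum_le_sum fun r _ => sum_le_sum_of_card_le_of_forall_sdiff_le (hcount r)
    (fun i _ => shadowPrice_nonneg hv i) fun i hi j hj => ?_
  simp only [mem_sdiff, mem_filter_univ] at hi hj
  exact shadowPrice_le_of_canPass ⟨r, hi.1, hH' j hj.1, hj.2⟩

/-- For one bidder with valuation `v`, facing a price of `w` per round, `δ` stands for the change in
its payment and `d` for the change in its number of rounds. -/
theorem mul_le_mul_of_mul_le_of_lt {K : Type*} [Ring K] [LinearOrder K] [IsStrictOrderedRing K]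
    {v w δ : K} {d : ℤ} (hw : 0 ≤ w) (hwv : w ≤ v) (hδ : w < v → δ < w) (h : w * d ≤ δ) :
    v * d ≤ w * d := by
  rcases hwv.eq_or_lt with rfl | hlt
  · exact le_rfl
  · have hd : d ≤ 0 := by
      by_contra! hd
      have hd1 : (1 : K) ≤ d := by exact_mod_cast hd
      exact ((le_mul_of_one_le_right hw hd1).trans h).not_gt (hδ hlt)
    exact mul_le_mul_of_nonpos_right hwv (by exact_mod_cast hd)

section Pareto

variable {I R : Type*} [Fintype I] [DecidableEq R] {m : ℕ} {S H : I → Finset R}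
  {v b p : I → ℝ}

theorem ParetoOptComb.le_card_filter_mem (hPO : ParetoOptComb m S v b H p)
    (hlegal : LegalComb m S b H p) {i : I} {r : R} (hvi : 0 < v i) (hrS : r ∈ S i)
    (hrH : r ∉ H i) : m ≤ #{l | r ∈ H l} := by
  classical
  obtain ⟨hHS, hcount, hbudget⟩ := hlegal
  by_contra! hfree
  have hutility (l : I) : v l * #(grantRound H i r l) - p l =
      v l * #(H l) - p l + if l = i then v i else 0 := by
    rw [card_grantRound hrH]
    split_ifs with hl
    · subst hl
      push_cast
      ring
    · simp
  refine hPO ⟨grantRound H i r, p, ⟨grantRound_subset hHS hrS, fun q => ?_, hbudget⟩,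
    fun l => ?_, le_rfl, Or.inl ⟨i, ?_⟩⟩
  · rw [card_filter_mem_grantRound hrH]
    split_ifs with hq
    · exact hq ▸ hfree
    · exact hcount q
  · rw [hutility]
    split_ifs <;> linarith
  · rw [hutility, if_pos rfl]
    linarith

theorem ParetoOptComb.not_isTradingPath (hPO : ParetoOptComb m S v b H p)
    (hlegal : LegalComb m S b H p) {k : ℕ} {a : Fin (k + 1) → I} {t : Fin k → R}
    (hv : 0 ≤ v (a 0)) (ha : Function.Injective a) : ¬ IsTradingPath S H v b p k a t := by
  classical
  rintro ⟨hpath, hlt, hslack⟩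
  obtain ⟨hHS, hcount, hbudget⟩ := hlegal
  obtain ⟨H', hH'S, hcount', hcard⟩ := hpath.exists_trade hHS ha
  set x := a 0
  set y := a (Fin.last k)
  have hgain (i : I) : (#(H' i) : ℝ) - #(H i) =
      (if i = y then 1 else 0) - if i = x then 1 else 0 := by
    rw [sub_eq_sub_iff_add_eq_add, add_comm (ite _ _ _)]
    exact_mod_cast hcard i
  -- Rounds change hands at the price `v x`.
  have hutility (i : I) : v i * #(H' i) - (p i + v x * (#(H' i) - #(H i))) =
      v i * #(H i) - p i + (v i - v x) * (#(H' i) - #(H i)) := by ring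
  have hyx : y ≠ x := fun h => hlt.ne (congrArg v h.symm)
  refine hPO ⟨H', fun i => p i + v x * (#(H' i) - #(H i)),
    ⟨hH'S, fun r => (hcount' r).trans_le (hcount r), fun i => ?_⟩, fun i => ?_, ?_,
    Or.inl ⟨y, ?_⟩⟩
  · beta_reduce
    rw [hgain]
    have := hbudget i
    split_ifs with hiy hix <;> subst_vars <;> linarith
  · rw [hutility, hgain]
    split_ifs with hiy hix <;> subst_vars <;> linarith
  · simp [hgain, sum_add_distrib, ← mul_sum]
  · rw [hutility, hgain]
    simp [hyx, hlt]

theorem paretoOptComb_of_sold_of_not_hasSimpleTradingPath [Finite R] (hv : ∀ i, 0 ≤ v i)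
    (hsold : ∀ r, #{i | r ∈ H i} = m) (hno : ¬ HasSimpleTradingPath S H v b p) :
    ParetoOptComb m S v b H p := by
  rintro ⟨H', p', ⟨hH'S, hcount, hbudget⟩, hutility, hrevenue, hstrict⟩
  set w := shadowPrice S H v
  set d : I → ℤ := fun i => #(H' i) - #(H i) with hd
  have hprice : ∑ i, w i * d i ≤ 0 := by
    have := sum_shadowPrice_mul_card_le (H := H) hv hH'S fun r => (hcount r).trans_eq (hsold r).symm
    simpa [hd, mul_sub] using this
  have hworth (i : I) (h : w i * d i ≤ p' i - p i) : v i * d i ≤ w i * d i :=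
    mul_le_mul_of_mul_le_of_lt (shadowPrice_nonneg hv i) (shadowPrice_le_self S H v i)
      (fun hi => by linarith [sub_lt_shadowPrice hno hi, hbudget i]) h
  have hgain (i : I) : p' i - p i ≤ v i * d i := by
    have := hutility i
    push_cast [hd]
    linarith
  have hcharge (i : I) : p' i - p i ≤ w i * d i := by
    by_contra! h
    linarith [hworth i h.le, hgain i]
  have hsum : ∑ i, (p' i - p i) = ∑ i, w i * d i := by
    refine (sum_le_sum fun i _ => hcharge i).antisymm ?_
    rw [sum_sub_distrib]
    linarith
  rcases hstrict with ⟨i, hi⟩ | hlt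
  · have hexact := (sum_eq_sum_iff_of_le fun i _ => hcharge i).mp hsum i (mem_univ i)
    have := hworth i hexact.ge
    push_cast [hd] at this hexact
    linarith
  · rw [sum_sub_distrib] at hsum
    linarith

end Pareto

theorem stmt13 {I R : Type*} [Fintype I] [DecidableEq I] [Fintype R] [DecidableEq R]
    (m : ℕ) (S : I → Finset R) (v b : I → ℝ)
    (hv : ∀ i, 0 < v i)
    -- every round is contained in the interest sets of at least m bidders
    (hS : ∀ r : R, m ≤ (univ.filter fun i : I => r ∈ S i).card)
    (H : I → Finset R) (p : I → ℝ)
    (hlegal : LegalComb m S b H p) :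
    ParetoOptComb m S v b H p ↔
      ((∀ r : R, (univ.filter fun i : I => r ∈ H i).card = m) ∧
        ¬ ∃ (k : ℕ) (a : Fin (k + 1) → I) (t : Fin k → R),
          IsTradingPath S H v b p k a t ∧
          Function.Injective a ∧ Function.Injective t) := by
  refine ⟨fun hPO => ⟨fun r => ?_, ?_⟩, fun ⟨hsold, hno⟩ =>
    paretoOptComb_of_sold_of_not_hasSimpleTradingPath (fun i => (hv i).le) hsold hno⟩
  · refine (hlegal.2.1 r).eq_of_not_lt fun hfree => ?_
    obtain ⟨i, hiS, hiH⟩ := exists_mem_notMem_of_card_lt_card (hfree.trans_le (hS r))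
    rw [mem_filter_univ] at hiS hiH
    exact hfree.not_ge (hPO.le_card_filter_mem hlegal (hv i) hiS hiH)
  · rintro ⟨k, a, t, htrade, ha, -⟩
    exact hPO.not_isTradingPath hlegal (hv (a 0)).le ha htrade
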